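/- Let P be a real symmetric d×d matrix such that I − P² is positive semidefinite, and let S be the positive semidefinite square root of I − P². Let U be the 2d×2d block matrix [[P, S], [−S, P]]. Then for every n ≥ 1, U^n equals the block matrix [[T_n(P), S · U_{n−1}(P)], [−S · U_{n−1}(P), T_n(P)]], where T_n(P) and U_{n−1}(P) denote the evaluations at P of the Chebyshev polynomials of the first and second kind, respectively. -/

import Mathlib

open Matrix Polynomial
open scoped MatrixOrder

/-- De Moivre's formula for block rotations: if `S` commutes with `P` and `S * S = 1 - P ^ 2`, the
powers of `[[P, S], [-S, P]]` are given by Chebyshev polynomials in `P`. -/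
theorem Matrix.fromBlocks_pow_eq_chebyshev {R m : Type*} [CommRing R] [Fintype m] [DecidableEq m]
    {P S : Matrix m m R} (hcomm : Commute S P) (hsq : S * S = 1 - P ^ 2) (n : ℕ) :
    (fromBlocks P S (-S) P) ^ n =
      fromBlocks (aeval P (Chebyshev.T R n)) (S * aeval P (Chebyshev.U R ((n : ℤ) - 1)))
        (-(S * aeval P (Chebyshev.U R ((n : ℤ) - 1)))) (aeval P (Chebyshev.T R n)) := by
  induction n with
  | zero => simp
  | succ n ih =>
    have hS (q : R[X]) : aeval P q * S = S * aeval P q := by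
      induction q using Polynomial.induction_on' with
      | add p q hp hq => simp [add_mul, mul_add, hp, hq]
      | monomial k a =>
        simpa [aeval_monomial, ← Algebra.smul_def] using congrArg (a • ·) (hcomm.pow_right k).eq.symm
    have hP (q : R[X]) : aeval P q * P = P * aeval P q := by
      simpa using congrArg (aeval P) (mul_comm q X)
    have hT : aeval P (Chebyshev.T R ((n : ℤ) + 1)) =
        P * aeval P (Chebyshev.T R n) - S * S * aeval P (Chebyshev.U R ((n : ℤ) - 1)) := by
      have key := Chebyshev.T_eq_X_mul_T_sub_pol_U R ((n : ℤ) - 1)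
      rw [show (n : ℤ) - 1 + 2 = n + 1 by ring, sub_add_cancel] at key
      simp [key, hsq]
    have hU : aeval P (Chebyshev.U R n) =
        P * aeval P (Chebyshev.U R ((n : ℤ) - 1)) + aeval P (Chebyshev.T R n) := by
      have key := Chebyshev.U_eq_X_mul_U_add_T R ((n : ℤ) - 1)
      rw [sub_add_cancel] at key
      simp [key]
    rw [pow_succ, ih, fromBlocks_multiply]
    push_cast
    rw [add_sub_cancel_right, hT, hU]
    congr 1 <;> simp only [mul_neg, neg_mul, mul_assoc, hS, hP, mul_add] <;> abel

/-- with `P` real symmetric, `I − P²` positive semidefinite, `S = √(I − P²)` and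
`U = [[P, S], [−S, P]]`, for every `n ≥ 1`,
`U^n = [[T_n(P), S·U_{n−1}(P)], [−S·U_{n−1}(P), T_n(P)]]`. -/
theorem block_matrix_pow_chebyshev
    (d : ℕ) (P : Matrix (Fin d) (Fin d) ℝ) (hP : P.IsSymm)
    (h : ((1 : Matrix (Fin d) (Fin d) ℝ) - P ^ 2).PosSemidef)
    (n : ℕ) (hn : 1 ≤ n) :
    (Matrix.fromBlocks P (CFC.sqrt (1 - P ^ 2)) (-CFC.sqrt (1 - P ^ 2)) P) ^ n =
      Matrix.fromBlocks
        (Polynomial.aeval P (Polynomial.Chebyshev.T ℝ n))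
        (CFC.sqrt (1 - P ^ 2) * Polynomial.aeval P (Polynomial.Chebyshev.U ℝ ((n : ℤ) - 1)))
        (-(CFC.sqrt (1 - P ^ 2) * Polynomial.aeval P (Polynomial.Chebyshev.U ℝ ((n : ℤ) - 1))))
        (Polynomial.aeval P (Polynomial.Chebyshev.T ℝ n)) := by
  have hcomm : Commute (CFC.sqrt (1 - P ^ 2)) P := by
    have hbase : Commute (1 - P ^ 2) P :=
      (Commute.one_left P).sub_left ((Commute.refl P).pow_left 2)
    exact hbase.cfcₙ_nnreal _
  exact Matrix.fromBlocks_pow_eq_chebyshev hcomm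
    (CFC.sqrt_mul_sqrt_self (1 - P ^ 2) h.nonneg) n
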